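/- Let ℓ, β ∈ ℝ with cos ℓ ≠ -1, and let s : ℝ → ℝ be a function differentiable at α₀ which satisfies cos β = -cos α · cos(s(α) - α) + sin α · sin(s(α) - α) · cos ℓ for all α in some neighborhood of α₀. If s(α₀) = 2α₀, α₀ ∈ (0, π) and α₀ ≠ π/2, then s'(α₀) = 0; that is, the isosceles configuration is a critical point of the angle-sum function. -/

import Mathlib

open Real

/-!
The cosine of the third angle of a spherical triangle is a symmetric function of the other two
angles `a` and `b`. At a point of the diagonal its two partial derivatives therefore agree, so
its differential there is a function of `da + db` alone. Along a level curve through such a point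
`da + db = 0` to first order, as soon as the common partial derivative, here
`sin a * cos a * (1 + cos ℓ)`, does not vanish. Continuity of the curve is enough: the error
`o(|da| + |db|)` is `o(|da| + |da + db|)`, and the second term is absorbed into the left side.
-/

open Asymptotics Filter Function
open scoped NNReal Topology

theorem isLittleO_fst_of_isLittleO_prodMk {α E F : Type*} [NormedAddCommGroup E]
    [NormedAddCommGroup F] {l : Filter α} {u : α → E} {v : α → F}
    (h : u =o[l] fun x => (u x, v x)) : u =o[l] v := by
  have hsum : u =o[l] fun x => ‖u x‖ + ‖v x‖ := by
    refine h.trans_isBigO (.of_norm_le fun x => ?_)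
    exact max_le_add_of_nonneg (norm_nonneg _) (norm_nonneg _)
  have hbound : (fun x => ‖u x‖ + ‖v x‖) =O[l] v := by
    simpa only [add_sub_cancel_left, isBigO_norm_right] using hsum.norm_left.right_isBigO_sub
  exact hsum.trans_isBigO hbound

section SymmetricFunction

variable {𝕜 E G : Type*} [NontriviallyNormedField 𝕜] [NormedAddCommGroup E] [NormedSpace 𝕜 E]
  [NormedAddCommGroup G] [NormedSpace 𝕜 G]

theorem hasFDerivAt_uncurry_diag_of_symm {f : E → E → G} {f' : E →L[𝕜] G} {a : E}
    (hsymm : ∀ x y, f x y = f y x) (hf : DifferentiableAt 𝕜 (uncurry f) (a, a))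
    (hf' : HasFDerivAt (f · a) f' a) :
    HasFDerivAt (uncurry f) (f'.coprod f') (a, a) := by
  have hleft : (fderiv 𝕜 (uncurry f) (a, a)).comp (.inl 𝕜 E E) = f' :=
    (hf.hasFDerivAt.comp (f := (·, a)) a (hasFDerivAt_prodMk_left a a)).unique hf'
  have hright : (fderiv 𝕜 (uncurry f) (a, a)).comp (.inr 𝕜 E E) = f' := by
    refine (hf.hasFDerivAt.comp a (hasFDerivAt_prodMk_right a a)).unique ?_
    exact hf'.congr_of_eventuallyEq (.of_forall fun x => hsymm a x)
  have hcoprod : fderiv 𝕜 (uncurry f) (a, a) = f'.coprod f' := by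
    rw [← ContinuousLinearMap.coprod_comp_inl_inr (fderiv 𝕜 (uncurry f) (a, a)), hleft, hright]
  exact hcoprod ▸ hf.hasFDerivAt

theorem hasFDerivAt_neg_id_of_symm_of_eventually_eq_const {f : E → E → G} {f' : E →L[𝕜] G}
    {K : ℝ≥0} {b : E → E} {a : E} {c : G} (hsymm : ∀ x y, f x y = f y x)
    (hf : DifferentiableAt 𝕜 (uncurry f) (a, a)) (hf' : HasFDerivAt (f · a) f' a)
    (hK : AntilipschitzWith K f') (hb : ContinuousAt b a) (hba : b a = a)
    (hc : ∀ᶠ x in 𝓝 a, f x (b x) = c) :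
    HasFDerivAt b (-.id 𝕜 E) a := by
  let u : E → E := fun x => (b x - a) + (x - a)
  have htendsto : Tendsto (fun x => (x, b x)) (𝓝 a) (𝓝 (a, a)) := by
    simpa only [hba] using ((continuousAt_id' a).prodMk hb).tendsto
  have hlinear : (fun x => f' (u x)) =o[𝓝 a] fun x => (x - a, b x - a) := by
    have hexpand := (hasFDerivAt_uncurry_diag_of_symm hsymm hf hf').isLittleO.comp_tendsto htendsto
    refine hexpand.neg_left.congr' ?_ .rfl
    have hca : f a a = c := by simpa only [hba] using hc.self_of_nhds
    filter_upwards [hc] with x hx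
    simp [u, hx, hca, add_comm]
  have hu : u =o[𝓝 a] fun x => (u x, x - a) := by
    have hinv : u =O[𝓝 a] fun x => f' (u x) :=
      .of_bound K (.of_forall fun x => f'.bound_of_antilipschitz hK (u x))
    have hsnd : (fun x => b x - a) =O[𝓝 a] fun x => (u x, x - a) := by
      simpa [u] using (isBigO_fst_prod (f' := u) (g' := (· - a))).sub isBigO_snd_prod
    exact hinv.trans_isLittleO (hlinear.trans_isBigO (isBigO_snd_prod.prod_left hsnd))
  refine .of_isLittleO ((isLittleO_fst_of_isLittleO_prodMk hu).congr_left fun x => ?_)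
  simp only [u, hba, neg_apply, ContinuousLinearMap.id_apply, sub_neg_eq_add]

theorem hasDerivAt_neg_one_of_symm_of_eventually_eq_const {f : 𝕜 → 𝕜 → G} {f' : G} {b : 𝕜 → 𝕜}
    {a : 𝕜} {c : G} (hsymm : ∀ x y, f x y = f y x)
    (hf : DifferentiableAt 𝕜 (uncurry f) (a, a)) (hf' : HasDerivAt (f · a) f' a) (hne : f' ≠ 0)
    (hb : ContinuousAt b a) (hba : b a = a) (hc : ∀ᶠ x in 𝓝 a, f x (b x) = c) :
    HasDerivAt b (-1) a := by
  have hK : AntilipschitzWith ‖f'‖₊⁻¹ (ContinuousLinearMap.toSpanSingleton 𝕜 f') := by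
    refine ContinuousLinearMap.antilipschitz_of_bound _ fun x => le_of_eq ?_
    have hnorm : ‖f'‖ ≠ 0 := norm_ne_zero_iff.mpr hne
    simp [norm_smul, mul_left_comm, hnorm]
  simpa using (hasFDerivAt_neg_id_of_symm_of_eventually_eq_const hsymm hf hf'.hasFDerivAt hK hb hba
    hc).hasDerivAt

end SymmetricFunction

/-- The cosine of the third angle of a triangle with angles `a` and `b`, as given by the law of
cosines for angles. The parameter `k` is `cos ℓ` on the sphere and `cosh ℓ` in the hyperbolic
plane, where `ℓ` is the length of the side between `a` and `b`. -/
noncomputable def cosThirdAngle (k a b : ℝ) : ℝ :=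
  -cos a * cos b + sin a * sin b * k

theorem cosThirdAngle_comm (k a b : ℝ) : cosThirdAngle k a b = cosThirdAngle k b a := by
  unfold cosThirdAngle
  ring

theorem differentiable_uncurry_cosThirdAngle (k : ℝ) :
    Differentiable ℝ (uncurry (cosThirdAngle k)) := by
  unfold cosThirdAngle uncurry
  fun_prop

theorem hasDerivAt_cosThirdAngle_left (k a b : ℝ) :
    HasDerivAt (cosThirdAngle k · b) (sin a * cos b + cos a * sin b * k) a := by
  unfold cosThirdAngle
  simpa using ((hasDerivAt_cos a).fun_neg.mul_const (cos b)).fun_add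
    (((hasDerivAt_sin a).mul_const (sin b)).mul_const k)

theorem sin_two_mul_ne_zero_of_mem_Ioo {x : ℝ} (hx : x ∈ Set.Ioo 0 π) (hne : x ≠ π / 2) :
    sin (2 * x) ≠ 0 := by
  rw [← neg_ne_zero, ← sin_sub_pi, Ne,
    sin_eq_zero_iff_of_lt_of_lt (by linarith [hx.1]) (by linarith [hx.2])]
  exact fun h => hne (by linarith)

theorem stmt_4_general {k c a : ℝ} {s : ℝ → ℝ} (hk : k ≠ -1) (hs : ContinuousAt s a)
    (hrel : ∀ᶠ x in 𝓝 a, c = -cos x * cos (s x - x) + sin x * sin (s x - x) * k)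
    (hiso : s a = 2 * a) (ha : sin (2 * a) ≠ 0) :
    HasDerivAt s 0 a := by
  have hpartial : sin a * cos a + cos a * sin a * k ≠ 0 := by
    have : sin (2 * a) * (1 + k) ≠ 0 := mul_ne_zero ha fun h => hk (by linarith)
    contrapose! this
    rw [sin_two_mul]
    linear_combination 2 * this
  have hother : HasDerivAt (fun x => s x - x) (-1) a :=
    hasDerivAt_neg_one_of_symm_of_eventually_eq_const (cosThirdAngle_comm k)
      (differentiable_uncurry_cosThirdAngle k _) (hasDerivAt_cosThirdAngle_left k a a) hpartial
      (hs.sub continuousAt_id) (by rw [hiso]; ring) (hrel.mono fun _ h => h.symm)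
  simpa using hother.fun_add (hasDerivAt_id a)

theorem stmt_4 (ℓ β α₀ : ℝ) (s : ℝ → ℝ)
    (hℓ : Real.cos ℓ ≠ -1)
    (hdiff : DifferentiableAt ℝ s α₀)
    (hrel : ∀ᶠ α in nhds α₀,
      Real.cos β = -Real.cos α * Real.cos (s α - α)
        + Real.sin α * Real.sin (s α - α) * Real.cos ℓ)
    (hiso : s α₀ = 2 * α₀)
    (hα : α₀ ∈ Set.Ioo 0 Real.pi)
    (hne : α₀ ≠ Real.pi / 2) :
    deriv s α₀ = 0 :=
  (stmt_4_general hℓ hdiff.continuousAt hrel hiso (sin_two_mul_ne_zero_of_mem_Ioo hα hne)).deriv
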